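/- (Theorem A, parabolic case.) Let g be a holomorphic function on the punctured unit disc 𝔻* and let c ∈ ℂ with c ≠ 0. Assume that for every θ ∈ ℝ there exists a branch L_θ of the logarithm on 𝔻 ∖ l^θ such that the map φ_θ(z) = g(z) + (c/(2πi))·L_θ(z) is injective on 𝔻 ∖ l^θ (so that φ_θ is a developing map of a uniformizable projective structure on 𝔻* with parabolic monodromy z ↦ z + c). Then: (1) there exist a₋₁ ∈ ℂ and a holomorphic function G on 𝔻 with g(z) = a₋₁/z + G(z) on 𝔻* (g extends meromorphically with a pole of order at most 1 at 0); and (2) if a₋₁ ≠ 0, then for each θ there is ρ ∈ (0,1) such that the Schwarzian derivative ξ = S(φ_θ) is defined on B(0,ρ) ∖ l^θ and the function z ↦ ξ(z) + c/(a₋₁·π·i·z) extends holomorphically to B(0,ρ); that is, ξ has a simple pole at 0 with residue −c/(a₋₁·π·i). -/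

import Mathlib

open Complex Metric Set Filter Topology

/-- The closed ray `{t·e^{iθ} : t ≥ 0} ⊆ ℂ`. -/
def lray (θ : ℝ) : Set ℂ :=
  {z : ℂ | ∃ t : ℝ, 0 ≤ t ∧ z = (t : ℂ) * Complex.exp (θ * Complex.I)}

/-- The Schwarzian derivative `S(f) = (f''/f')' - (1/2)·(f''/f')²`. -/
noncomputable def schwarzian (f : ℂ → ℂ) (z : ℂ) : ℂ :=
  deriv (fun w => deriv (deriv f) w / deriv f w) z
    - (1 / 2) * (deriv (deriv f) z / deriv f z) ^ 2

section Helpers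
open MeasureTheory

lemma polar_aux (F : ℂ → ℝ) (a b : ℝ) (ha : 0 ≤ a) (hab : a < b)
    (hF : ContinuousOn F {z | a ≤ ‖z‖ ∧ ‖z‖ ≤ b}) :
    ∫ z in {z : ℂ | a < ‖z‖ ∧ ‖z‖ < b}, F z
      = ∫ t in a..b, t * (2 * Real.pi * Real.circleAverage F 0 t) := by
  have hm : MeasurableSet {z : ℂ | a < ‖z‖ ∧ ‖z‖ < b} := by measurability
  rw [← integral_indicator hm, ← Complex.integral_comp_polarCoord_symm]
  have hnorm : ∀ t θ : ℝ, 0 ≤ t → ‖(t:ℂ) * (Real.cos θ + Real.sin θ * I)‖ = t := by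
    intro t θ ht
    rw [ofReal_cos, ofReal_sin, ← Complex.exp_mul_I, norm_mul, Complex.norm_exp_ofReal_mul_I]
    simp [abs_of_nonneg ht]
  have h1 : ∫ p in polarCoord.target, p.1 • ({z : ℂ | a < ‖z‖ ∧ ‖z‖ < b}.indicator F (Complex.polarCoord.symm p))
      = ∫ p in (Ioo a b) ×ˢ (Ioo (-Real.pi) Real.pi), p.1 * F (p.1 * (Real.cos p.2 + Real.sin p.2 * I)) := by
    have hsub : (Ioo a b) ×ˢ (Ioo (-Real.pi) Real.pi) ⊆ polarCoord.target := by
      rintro ⟨t, θ⟩ ⟨h1, h2⟩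
      exact ⟨lt_of_le_of_lt ha h1.1, h2⟩
    rw [setIntegral_eq_of_subset_of_forall_sdiff_eq_zero (s := (Ioo a b) ×ˢ (Ioo (-Real.pi) Real.pi)) _ hsub]
    · apply setIntegral_congr_fun (by measurability)
      rintro ⟨t, θ⟩ ⟨h1, h2⟩
      have := hnorm t θ (ha.trans h1.1.le)
      simp only [Complex.polarCoord_symm_apply, smul_eq_mul]
      rw [indicator_of_mem]
      simp only [mem_ofPred_eq]
      rw [this]; exact h1
    · rintro ⟨t, θ⟩ ⟨⟨h1, h2⟩, h3⟩
      simp only [Complex.polarCoord_symm_apply, smul_eq_mul]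
      rw [indicator_of_notMem, mul_zero]
      simp only [mem_ofPred_eq]
      rw [hnorm t θ (le_of_lt h1)]
      intro h; exact h3 ⟨h, h2⟩
    · exact polarCoord.open_target.measurableSet
  rw [h1, Measure.volume_eq_prod, setIntegral_prod]
  · rw [intervalIntegral.integral_of_le hab.le, integral_Ioc_eq_integral_Ioo]
    apply setIntegral_congr_fun measurableSet_Ioo
    intro t ht
    simp only
    rw [integral_const_mul]
    congr 1
    rw [Real.circleAverage_eq_integral_add (-Real.pi)]
    rw [← integral_Ioc_eq_integral_Ioo, ← intervalIntegral.integral_of_le (by linarith [Real.pi_pos]), intervalIntegral.integral_comp_add_right (fun θ => F (circleMap 0 t θ))]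
    have : -Real.pi = 0 + -Real.pi := by ring
    rw [smul_eq_mul, ← mul_assoc, mul_inv_cancel₀ (by positivity), one_mul]
    rw [show 0 + -Real.pi = -Real.pi by ring, show 2 * Real.pi + -Real.pi = Real.pi by ring]
    apply intervalIntegral.integral_congr
    intro θ _
    simp only [circleMap, zero_add]
    rw [Complex.exp_mul_I]; simp
  · rw [← Measure.volume_eq_prod]
    have : ContinuousOn (fun p : ℝ × ℝ => p.1 * F (p.1 * (Real.cos p.2 + Real.sin p.2 * I))) (Icc a b ×ˢ Icc (-Real.pi) Real.pi) := by
      apply ContinuousOn.mul (by fun_prop)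
      apply hF.comp (by fun_prop)
      rintro ⟨t, θ⟩ ⟨h1, h2⟩
      simp only [mem_ofPred_eq]
      rw [hnorm t θ (ha.trans h1.1)]; exact h1
    exact (this.integrableOn_compact (isCompact_Icc.prod isCompact_Icc)).mono_set (prod_mono Ioo_subset_Icc_self Ioo_subset_Icc_self)

lemma det_aux (d : ℂ) : ((ContinuousLinearMap.toSpanSingleton ℂ d).restrictScalars ℝ).det = ‖d‖^2 := by
  have : (ContinuousLinearMap.toSpanSingleton ℂ d) = d • ContinuousLinearMap.id ℂ ℂ := by ext; simp
  rw [this]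
  change LinearMap.det ((d • (LinearMap.id : ℂ →ₗ[ℂ] ℂ)).restrictScalars ℝ) = _
  rw [LinearMap.det_restrictScalars]
  simp [Algebra.norm_complex_eq, Complex.normSq_eq_norm_sq]

lemma avg_re (F : ℂ → ℂ) (t : ℝ) (ht : 0 ≤ t) (hF : DiffContOnCl ℂ F (ball 0 t)) :
    Real.circleAverage (fun z => (F z).re) 0 t = (F 0).re := by
  have hF' : DiffContOnCl ℂ F (ball 0 |t|) := by rwa [abs_of_nonneg ht]
  rw [← hF'.circleAverage]
  have hi : CircleIntegrable F 0 t := by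
    apply ContinuousOn.circleIntegrable ht
    exact hF.continuousOn_ball.mono sphere_subset_closedBall
  exact ((Complex.reCLM).circleAverage_comp_comm hi)

lemma avg_lower (k : ℂ → ℂ) (t : ℝ) (ht : 0 ≤ t) (hk : DiffContOnCl ℂ k (ball 0 t)) :
    ‖k 0‖ ^ 2 ≤ Real.circleAverage (fun z => ‖k z‖ ^ 2) 0 t := by
  have hF : DiffContOnCl ℂ (fun z => 2 * (starRingEnd ℂ (k 0) * k z) - (starRingEnd ℂ (k 0) * k 0)) (ball 0 t) := by
    have h1 : DiffContOnCl ℂ ((2 * starRingEnd ℂ (k 0)) • k) (ball 0 t) := hk.const_smul _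
    convert h1.sub_const (starRingEnd ℂ (k 0) * k 0) using 2
    simp; ring
  have h := avg_re _ t ht hF
  have hc : ContinuousOn k (sphere 0 t) := hk.continuousOn_ball.mono sphere_subset_closedBall
  have e : ∀ z, (2 * (starRingEnd ℂ (k 0) * k z) - (starRingEnd ℂ (k 0) * k 0)).re ≤ ‖k z‖^2 := by
    intro z
    rw [← Complex.normSq_eq_norm_sq, Complex.normSq_apply]
    simp
    nlinarith [sq_nonneg ((k z).re - (k 0).re), sq_nonneg ((k z).im - (k 0).im)]
  calc ‖k 0‖^2 = (2 * (starRingEnd ℂ (k 0) * k 0) - (starRingEnd ℂ (k 0) * k 0)).re := by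
        rw [← Complex.normSq_eq_norm_sq, Complex.normSq_apply]; simp; ring
    _ = _ := h.symm
    _ ≤ _ := by
      apply Real.circleAverage_mono
      · apply ContinuousOn.circleIntegrable ht; fun_prop
      · apply ContinuousOn.circleIntegrable ht; fun_prop
      · intro z _; exact e z

lemma avg_area (k : ℂ → ℂ) (t : ℝ) (ht : 0 < t) (hk : DiffContOnCl ℂ k (ball 0 t)) :
    Real.circleAverage (fun z => ‖-(z^2)⁻¹ + k z‖ ^ 2) 0 t = (t^4)⁻¹ + Real.circleAverage (fun z => ‖k z‖ ^ 2) 0 t := by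
  have hF : DiffContOnCl ℂ (fun z => (-2 * (t^4:ℂ)⁻¹ * z^2) • k z) (ball 0 t) := by
    apply DiffContOnCl.smul _ hk
    apply Differentiable.diffContOnCl
    fun_prop
  have h := avg_re _ t ht.le hF
  have hc : ContinuousOn k (sphere 0 t) := hk.continuousOn_ball.mono sphere_subset_closedBall
  have hi1 : CircleIntegrable (fun z => ‖k z‖ ^ 2) 0 t := by
    apply ContinuousOn.circleIntegrable ht.le; fun_prop
  have hi2 : CircleIntegrable (fun z => ((-2 * (t^4:ℂ)⁻¹ * z^2) • k z).re) 0 t := by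
    apply ContinuousOn.circleIntegrable ht.le; fun_prop
  have hi3 : CircleIntegrable (fun z : ℂ => (t^4)⁻¹) 0 t := by
    apply ContinuousOn.circleIntegrable ht.le; fun_prop
  have hi4 : CircleIntegrable (fun z : ℂ => (t^4)⁻¹ + ‖k z‖ ^ 2) 0 t := hi3.add hi1
  have e : EqOn (fun z => ‖-(z^2)⁻¹ + k z‖ ^ 2) (fun z => ((t^4)⁻¹ + ‖k z‖^2) + ((-2 * (t^4:ℂ)⁻¹ * z^2) • k z).re) (sphere 0 |t|) := by
    intro z hz
    rw [abs_of_pos ht, mem_sphere_zero_iff_norm] at hz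
    have hz0 : z ≠ 0 := by rintro rfl; simp at hz; linarith
    have hinv : (z^2)⁻¹ = (t^4:ℂ)⁻¹ * starRingEnd ℂ (z^2) := by
      have : (t^4 : ℂ) = z^2 * starRingEnd ℂ (z^2) := by
        rw [Complex.mul_conj, Complex.normSq_eq_norm_sq, norm_pow, hz]; push_cast; ring
      rw [this]
      have h2 : starRingEnd ℂ (z^2) ≠ 0 := by simpa using hz0
      field_simp
    have hn : ‖(z^2)⁻¹‖ ^ 2 = (t^4)⁻¹ := by rw [norm_inv, norm_pow, hz]; field_simp
    have hx : ‖-(z^2)⁻¹ + k z‖ ^ 2 = ‖(z^2)⁻¹‖ ^ 2 + ‖k z‖^2 - 2 * (starRingEnd ℂ (z^2)⁻¹ * k z).re := by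
      simp only [← Complex.normSq_eq_norm_sq, Complex.normSq_apply]
      simp [-map_inv₀, -map_pow]; ring
    simp only
    rw [hx, hn, hinv]
    simp only [map_mul, Complex.conj_conj, smul_eq_mul]
    have : starRingEnd ℂ (t^4:ℂ)⁻¹ = (((t^4)⁻¹ : ℝ) : ℂ) := by
      rw [show (t^4:ℂ)⁻¹ = (((t^4)⁻¹ : ℝ) : ℂ) by push_cast; rfl, Complex.conj_ofReal]
    rw [this, show (t^4:ℂ)⁻¹ = (((t^4)⁻¹ : ℝ) : ℂ) by push_cast; rfl]
    have h3 : (-2 * (((t^4)⁻¹ : ℝ) : ℂ) * z^2 * k z) = ((-2 : ℝ) : ℂ) * ((((t^4)⁻¹ : ℝ) : ℂ) * z^2 * k z) := by push_cast; ring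
    rw [h3, Complex.re_ofReal_mul]; ring
  rw [Real.circleAverage_congr_sphere e, Real.circleAverage_fun_add hi4 hi2, Real.circleAverage_fun_add hi3 hi1, h, Real.circleAverage_const]
  simp

lemma cover_aux (F : ℂ → ℂ) (r m : ℝ) (hr : 0 < r) (hm : 0 < m) (hF : DiffContOnCl ℂ F (ball 0 r))
    (h0 : F 0 = 0) (hs : ∀ z ∈ sphere (0:ℂ) r, m ≤ ‖F z‖) : ball 0 m ⊆ F '' ball 0 r := by
  have hopen : IsOpen (F '' ball 0 r) := by
    have han : AnalyticOnNhd ℂ F (ball 0 r) := hF.differentiableOn.analyticOnNhd isOpen_ball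
    rcases han.is_constant_or_isOpen (convex_ball _ _).isPreconnected with ⟨w, hw⟩ | h
    · exfalso
      have hw0 : w = 0 := by rw [← hw 0 (mem_ball_self hr), h0]
      have : EqOn F (fun _ => 0) (closure (ball 0 r)) := by
        apply EqOn.of_subset_closure (s := ball 0 r) _ hF.continuousOn continuousOn_const subset_closure subset_rfl
        intro z hz; simp [hw z hz, hw0]
      have h1 : (r : ℂ) ∈ sphere (0:ℂ) r := by simp [abs_of_pos hr]
      have h2 := this (by rw [closure_ball _ hr.ne']; exact sphere_subset_closedBall h1)
      have h3 := hs _ h1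
      rw [h2] at h3; simp at h3; linarith
    · exact h _ subset_rfl isOpen_ball
  apply (convex_ball (0:ℂ) m).isPreconnected.subset_of_closure_inter_subset hopen
  · exact ⟨0, mem_ball_self hm, 0, mem_ball_self hr, h0⟩
  · rintro w ⟨hw, hwm⟩
    have hcl : IsClosed (F '' closedBall 0 r) :=
      ((isCompact_closedBall (0:ℂ) r).image_of_continuousOn hF.continuousOn_ball).isClosed
    have := closure_minimal (image_mono ball_subset_closedBall) hcl hw
    obtain ⟨z, hz, rfl⟩ := this
    refine ⟨z, ?_, rfl⟩
    rw [mem_ball_zero_iff] at hwm ⊢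
    rw [mem_closedBall_zero_iff] at hz
    refine lt_of_le_of_ne hz fun h => ?_
    have := hs z (by simpa using h)
    linarith

lemma incl_gen (n : ℂ → ℂ) (R r B : ℝ) (hr : 0 < r) (hrR : r < R) (hB : 0 ≤ B) (hrB : r ^ 2 * B < 1)
    (hn : DifferentiableOn ℂ n (ball 0 R))
    (hnB : ∀ z ∈ closedBall (0:ℂ) r, ‖n z - n 0‖ ≤ B * r) (w : ℂ)
    (hw : ∀ z, z ≠ 0 → ‖z‖ < r → z⁻¹ + n z ≠ w) :
    ‖w - n 0‖ ≤ r⁻¹ + r * B := by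
  by_contra! hcon
  have hden : ∀ z ∈ closedBall (0:ℂ) r, ‖z * (n z - n 0)‖ ≤ r ^ 2 * B := by
    intro z hz
    rw [norm_mul]
    have := hnB z hz
    rw [mem_closedBall_zero_iff] at hz
    calc _ ≤ r * (B * r) := by gcongr
      _ = _ := by ring
  have hden0 : ∀ z ∈ closedBall (0:ℂ) r, 1 + z * (n z - n 0) ≠ 0 := by
    intro z hz h
    have h3 := hden z hz
    have : z * (n z - n 0) = -1 := by linear_combination h
    rw [this] at h3; simp at h3; linarith
  have hsub : closedBall (0:ℂ) r ⊆ ball 0 R := closedBall_subset_ball hrR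
  have hM : 0 < r⁻¹ + r * B := by positivity
  have hF : DiffContOnCl ℂ (fun z => z / (1 + z * (n z - n 0))) (ball 0 r) := by
    apply DifferentiableOn.diffContOnCl
    rw [closure_ball _ hr.ne']
    have := hn.mono hsub
    apply DifferentiableOn.div differentiableOn_id _ hden0
    fun_prop
  have hc := cover_aux _ r (r⁻¹ + r * B)⁻¹ hr (by positivity) hF (by simp) (by
    intro z hz
    have hz' := sphere_subset_closedBall hz
    rw [mem_sphere_zero_iff_norm] at hz
    rw [norm_div, hz, show r⁻¹ + r * B = (1 + r^2 * B) / r by field_simp, inv_div]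
    have : ‖1 + z * (n z - n 0)‖ ≤ 1 + r^2 * B := by
      calc _ ≤ ‖(1:ℂ)‖ + ‖z * (n z - n 0)‖ := norm_add_le _ _
        _ ≤ _ := by rw [norm_one]; gcongr; exact hden z hz'
    have h4 : 0 < ‖1 + z * (n z - n 0)‖ := norm_pos_iff.2 (hden0 z hz')
    gcongr)
  have hwn : w - n 0 ≠ 0 := by
    rw [← norm_pos_iff]; linarith
  have hmem : (w - n 0)⁻¹ ∈ ball (0:ℂ) (r⁻¹ + r * B)⁻¹ := by
    rw [mem_ball_zero_iff, norm_inv]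
    gcongr
  obtain ⟨z, hz, hzw⟩ := hc hmem
  have hz' := ball_subset_closedBall hz
  have hz0 : z ≠ 0 := by
    rintro rfl
    simp at hzw
    exact hwn hzw.symm
  simp only at hzw
  have h5 : z⁻¹ + n z = w := by
    have h6 := hden0 z hz'
    have : w - n 0 = (1 + z * (n z - n 0)) / z := by rw [← inv_inv (w - n 0), ← hzw, inv_div]
    have h7 : w = n 0 + (1 + z * (n z - n 0)) / z := by rw [← this]; ring
    rw [h7]; field_simp; ring
  exact hw z hz0 (by simpa using hz) h5

lemma incl_aux (n : ℂ → ℂ) (R r B : ℝ) (hr : 0 < r) (hrR : r < R) (hB : 0 ≤ B) (hrB : r ^ 2 * B < 1)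
    (hn : DifferentiableOn ℂ n (ball 0 R))
    (hinj : InjOn (fun z => z⁻¹ + n z) (ball 0 R \ {0}))
    (hnB : ∀ z ∈ closedBall (0:ℂ) r, ‖n z - n 0‖ ≤ B * r) (z₀ : ℂ) (h1 : r < ‖z₀‖) (h2 : ‖z₀‖ < R) :
    ‖z₀⁻¹ + n z₀ - n 0‖ ≤ r⁻¹ + r * B := by
  apply incl_gen n R r B hr hrR hB hrB hn hnB
  intro z hz0 hz h5
  have hz₀ : z₀ ≠ 0 := by rw [← norm_pos_iff]; linarith
  have := hinj ⟨by simp; linarith, hz0⟩ ⟨by simpa using h2, hz₀⟩ h5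
  rw [this] at hz
  linarith

lemma area_aux (n : ℂ → ℂ) (R r B : ℝ) (hr : 0 < r) (hr1 : r < 1) (hR : 1 < R) (hB : 0 ≤ B) (hrB : r ^ 2 * B < 1)
    (hn : DifferentiableOn ℂ n (ball 0 R))
    (hinj : InjOn (fun z => z⁻¹ + n z) (ball 0 R \ {0}))
    (hkB : ∀ z ∈ closedBall (0:ℂ) r, ‖deriv n z‖ ≤ B) :
    ∫ z in ball (0:ℂ) 1, ‖deriv n z‖ ^ 2 ≤ Real.pi * (1 + 2 * B + 2 * r ^ 2 * B ^ 2) := by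
  set k := deriv n with hk
  have hkd : DifferentiableOn ℂ k (ball 0 R) := hn.deriv isOpen_ball
  have hkc : ContinuousOn k (closedBall 0 1) := hkd.continuousOn.mono (closedBall_subset_ball hR)
  have hnB : ∀ z ∈ closedBall (0:ℂ) r, ‖n z - n 0‖ ≤ B * r := by
    intro z hz
    have := (convex_closedBall (0:ℂ) r).norm_image_sub_le_of_norm_deriv_le (f := n) (C := B)
      (fun x hx => hn.differentiableAt (isOpen_ball.mem_nhds (closedBall_subset_ball (hr1.trans hR) hx)))
      hkB (mem_closedBall_self hr.le) hz
    refine this.trans ?_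
    rw [mem_closedBall_zero_iff] at hz
    rw [sub_zero]; gcongr
  set A : Set ℂ := {z : ℂ | r < ‖z‖ ∧ ‖z‖ < 1} with hA
  have hAm : MeasurableSet A := by measurability
  have hA0 : ∀ z ∈ A, z ≠ 0 := by rintro z ⟨h1, _⟩ rfl; simp at h1; linarith
  have hAR : A ⊆ ball 0 R := by rintro z ⟨_, h1⟩; simp; linarith
  have hder : ∀ z ∈ A, HasDerivAt (fun z => z⁻¹ + n z) (-(z^2)⁻¹ + k z) z := by
    intro z hz
    exact (hasDerivAt_inv (hA0 z hz)).add (hn.differentiableAt (isOpen_ball.mem_nhds (hAR hz))).hasDerivAt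
  have hvol := lintegral_abs_det_fderiv_eq_addHaar_image (s := A) (f := fun z : ℂ => z⁻¹ + n z)
    (f' := fun z => (ContinuousLinearMap.toSpanSingleton ℂ (-(z^2)⁻¹ + k z)).restrictScalars ℝ) volume hAm
    (fun z hz => ((hder z hz).hasFDerivAt.restrictScalars ℝ).hasFDerivWithinAt)
    (hinj.mono (show A ⊆ ball 0 R \ {0} from fun z hz => ⟨hAR hz, hA0 z hz⟩))
  have hle : volume ((fun z : ℂ => z⁻¹ + n z) '' A) ≤ ENNReal.ofReal (Real.pi * (r⁻¹ + r * B)^2) := by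
    calc _ ≤ volume (closedBall (n 0) (r⁻¹ + r * B)) := by
          apply measure_mono
          rintro _ ⟨z, hz, rfl⟩
          rw [mem_closedBall, dist_eq_norm]
          exact incl_aux n R r B hr (hr1.trans hR) hB hrB hn hinj hnB z hz.1 (hz.2.trans hR)
      _ = _ := by
          rw [Complex.volume_closedBall, mul_comm, ENNReal.ofReal_mul Real.pi_pos.le, ← ENNReal.ofReal_pow (by positivity)]
          congr 1
          exact (ENNReal.ofReal_coe_nnreal (p := NNReal.pi)).symm
  rw [← hvol] at hle
  simp only [det_aux, abs_pow, abs_norm] at hle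
  have hinvc : ContinuousOn (fun z : ℂ => -(z^2)⁻¹ + k z) {z | r ≤ ‖z‖ ∧ ‖z‖ ≤ 1} := by
    apply ContinuousOn.add
    · apply ContinuousOn.neg
      apply ContinuousOn.inv₀ (by fun_prop)
      rintro z ⟨h1, _⟩ h
      have : z = 0 := by simpa using h
      rw [this] at h1; simp at h1; linarith
    · apply hkc.mono; rintro z ⟨_, h⟩; simpa using h
  have hreal : ∫ z in A, ‖-(z^2)⁻¹ + k z‖^2 ≤ Real.pi * (r⁻¹ + r * B)^2 := by
    rw [integral_eq_lintegral_of_nonneg_ae]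
    · exact ENNReal.toReal_le_of_le_ofReal (by positivity) hle
    · exact Eventually.of_forall fun z => by positivity
    · apply ContinuousOn.aestronglyMeasurable _ hAm
      have := hinvc.mono (show A ⊆ _ from fun z hz => ⟨hz.1.le, hz.2.le⟩)
      fun_prop
  rw [hA, polar_aux _ r 1 hr.le hr1 (by fun_prop)] at hreal
  have hdc : ∀ t ∈ Icc r 1, DiffContOnCl ℂ k (ball 0 t) := by
    intro t ht
    apply DifferentiableOn.diffContOnCl
    rw [closure_ball _ (by linarith [ht.1])]
    exact hkd.mono (closedBall_subset_ball (by linarith [ht.2]))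
  have hkc2 : ContinuousOn (fun z => ‖k z‖^2) {z : ℂ | r ≤ ‖z‖ ∧ ‖z‖ ≤ 1} := by
    have : ContinuousOn k {z : ℂ | r ≤ ‖z‖ ∧ ‖z‖ ≤ 1} := by
      apply hkc.mono; rintro z ⟨_, h⟩; simpa using h
    fun_prop
  have hcavg : ContinuousOn (fun t => Real.circleAverage (fun z => ‖k z‖^2) 0 t) (Icc r 1) := by
    apply Real.ContinuousOn.circleAverage
    · simpa using hkc2
    · intro t ht; linarith [ht.1]
  have e1 : ∫ t in r..1, t * (2 * Real.pi * Real.circleAverage (fun z => ‖-(z^2)⁻¹ + k z‖^2) 0 t)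
      = ∫ t in r..1, (2 * Real.pi * (t^(-3:ℤ)) + t * (2 * Real.pi * Real.circleAverage (fun z => ‖k z‖^2) 0 t)) := by
    apply intervalIntegral.integral_congr
    intro t ht
    rw [uIcc_of_le hr1.le] at ht
    have ht0 : 0 < t := by linarith [ht.1]
    simp only
    rw [avg_area k t ht0 (hdc t ht), zpow_neg]
    norm_cast
    field_simp
  rw [e1, intervalIntegral.integral_add, intervalIntegral.integral_const_mul, integral_zpow, ← polar_aux _ r 1 hr.le hr1 hkc2] at hreal
  · rw [← hA] at hreal
    have hki : IntegrableOn (fun z => ‖k z‖^2) (closedBall 0 1) := by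
      apply ContinuousOn.integrableOn_compact (isCompact_closedBall _ _)
      fun_prop
    have hsplit : ball (0:ℂ) 1 = A ∪ closedBall 0 r := by
      ext z; simp [hA]; constructor
      · intro h; by_cases h1 : r < ‖z‖
        · left; exact ⟨h1, h⟩
        · right; linarith
      · rintro (h | h) <;> linarith [h]
    rw [hsplit, setIntegral_union]
    · have h3 : ∫ z in closedBall (0:ℂ) r, ‖k z‖^2 ≤ Real.pi * r^2 * B^2 := by
        calc _ ≤ ∫ z in closedBall (0:ℂ) r, B^2 := by
              apply setIntegral_mono_on
              · exact hki.mono_set (closedBall_subset_closedBall hr1.le)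
              · exact integrableOn_const (by simp [Complex.volume_closedBall, ENNReal.mul_eq_top])
              · exact measurableSet_closedBall
              · intro z hz
                have := hkB z hz
                gcongr
          _ = _ := by
              simp [Measure.real, Complex.volume_closedBall, hr.le]
              left; ring
      norm_num at hreal
      have : (r⁻¹ + r * B)^2 = r⁻¹^2 + 2 * B + r^2 * B^2 := by field_simp; ring
      rw [this] at hreal
      have h5 : r^(-2:ℤ) = r⁻¹^2 := by rw [zpow_neg, inv_pow]; norm_cast
      ring_nf at hreal ⊢
      try ring_nf at h5 h3
      try rw [h5] at hreal
      nlinarith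
    · rw [Set.disjoint_left]; rintro z ⟨h1, _⟩ h2; simp at h2; linarith
    · exact measurableSet_closedBall
    · apply hki.mono_set; rintro z ⟨_, h⟩; simp; exact h.le
    · exact hki.mono_set (closedBall_subset_closedBall hr1.le)
  · right; constructor
    · norm_num
    · rw [uIcc_of_le hr1.le]; intro h; linarith [h.1]
  · apply ContinuousOn.intervalIntegrable
    rw [uIcc_of_le hr1.le]
    apply ContinuousOn.mul continuousOn_const
    intro t ht
    exact (continuousAt_zpow₀ t _ (Or.inl (by linarith [ht.1]))).continuousWithinAt
  · apply ContinuousOn.intervalIntegrable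
    rw [uIcc_of_le hr1.le]
    fun_prop

lemma mv_aux (k : ℂ → ℂ) (R : ℝ) (hR : 1 < R) (hkd : DifferentiableOn ℂ k (ball 0 R)) (z₀ : ℂ) (h0 : ‖z₀‖ < 1) :
    Real.pi * (1 - ‖z₀‖)^2 * ‖k z₀‖^2 ≤ ∫ z in ball (0:ℂ) 1, ‖k z‖ ^ 2 := by
  set ρ := 1 - ‖z₀‖ with hρ
  have hρ0 : 0 < ρ := by linarith
  have hkc : ContinuousOn k (closedBall 0 1) := hkd.continuousOn.mono (closedBall_subset_ball hR)
  have hmap : ∀ z : ℂ, ‖z‖ ≤ ρ → ‖z₀ + z‖ ≤ 1 := fun z hz => (norm_add_le _ _).trans (by linarith)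
  have hki : IntegrableOn (fun z => ‖k z‖^2) (ball 0 1) := by
    apply IntegrableOn.mono_set _ ball_subset_closedBall
    apply ContinuousOn.integrableOn_compact (isCompact_closedBall _ _)
    fun_prop
  have hk2 : DifferentiableOn ℂ (fun z => k (z₀ + z)) (closedBall 0 ρ) := by
    apply hkd.comp (by fun_prop)
    intro z hz
    simp at hz ⊢
    linarith [hmap z hz]
  have hc : ContinuousOn (fun z => ‖k (z₀ + z)‖^2) (closedBall 0 ρ) := by
    exact hk2.continuousOn.norm.pow 2
  have hset : {z : ℂ | 0 < ‖z‖ ∧ ‖z‖ < ρ} = (fun z => z₀ + z) ⁻¹' {z | 0 < ‖z - z₀‖ ∧ ‖z - z₀‖ < ρ} := by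
    ext z; simp
  have e1 : ∫ z in {z : ℂ | 0 < ‖z‖ ∧ ‖z‖ < ρ}, ‖k (z₀ + z)‖^2 = ∫ z in {z | 0 < ‖z - z₀‖ ∧ ‖z - z₀‖ < ρ}, ‖k z‖^2 := by
    rw [hset]
    exact (measurePreserving_add_left volume z₀).setIntegral_preimage_emb (measurableEmbedding_addLeft z₀) (fun z => ‖k z‖^2) _
  have e2 : ∫ z in {z | 0 < ‖z - z₀‖ ∧ ‖z - z₀‖ < ρ}, ‖k z‖^2 ≤ ∫ z in ball (0:ℂ) 1, ‖k z‖ ^ 2 := by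
    apply setIntegral_mono_set hki
    · exact Eventually.of_forall fun z => by positivity
    · apply LE.le.eventuallyLE
      rintro z ⟨_, h⟩
      simp
      calc ‖z‖ = ‖z₀ + (z - z₀)‖ := by ring_nf
        _ ≤ _ := norm_add_le _ _
        _ < 1 := by linarith
  have hsub : {z : ℂ | 0 ≤ ‖z‖ ∧ ‖z‖ ≤ ρ} ⊆ closedBall 0 ρ := by rintro z ⟨_, h⟩; simpa using h
  rw [polar_aux _ 0 ρ le_rfl hρ0 (hc.mono hsub)] at e1
  have e3 : ∫ t in (0:ℝ)..ρ, t * (2 * Real.pi * ‖k z₀‖^2) ≤ ∫ t in (0:ℝ)..ρ, t * (2 * Real.pi * Real.circleAverage (fun z => ‖k (z₀ + z)‖^2) 0 t) := by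
    apply intervalIntegral.integral_mono_on hρ0.le
    · apply Continuous.intervalIntegrable; fun_prop
    · apply ContinuousOn.intervalIntegrable
      rw [uIcc_of_le hρ0.le]
      have : ContinuousOn (fun t => Real.circleAverage (fun z => ‖k (z₀ + z)‖^2) 0 t) (Icc 0 ρ) := by
        apply Real.ContinuousOn.circleAverage
        · apply hc.mono; rintro z h; simpa using h
        · intro t ht; exact ht.1
      fun_prop
    · intro t ht
      have h3 : DiffContOnCl ℂ (fun z => k (z₀ + z)) (ball 0 t) := by
        apply DifferentiableOn.diffContOnCl
        exact hk2.mono (closure_ball_subset_closedBall.trans (closedBall_subset_closedBall ht.2))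
      have h4 := avg_lower _ t ht.1 h3
      simp only [add_zero] at h4
      have := ht.1
      gcongr
  rw [intervalIntegral.integral_mul_const, integral_id] at e3
  nlinarith

lemma area_lim (n : ℂ → ℂ) (R : ℝ) (hR : 1 < R)
    (hn : DifferentiableOn ℂ n (ball 0 R))
    (hinj : InjOn (fun z => z⁻¹ + n z) (ball 0 R \ {0})) :
    ∫ z in ball (0:ℂ) 1, ‖deriv n z‖ ^ 2 ≤ Real.pi * (1 + 2 * ‖deriv n 0‖) := by
  set b := ‖deriv n 0‖ with hb
  have hb0 : 0 ≤ b := norm_nonneg _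
  have hcont : ContinuousAt (deriv n) 0 :=
    (hn.deriv isOpen_ball).continuousOn.continuousAt (ball_mem_nhds _ (by linarith))
  have key : ∀ ε ∈ Ioo (0:ℝ) 1, ∫ z in ball (0:ℂ) 1, ‖deriv n z‖ ^ 2 ≤ Real.pi * (1 + 2 * (b + ε) + 2 * ε ^ 2 * (b + ε) ^ 2) := by
    intro ε hε
    obtain ⟨δ, hδ, hδ2⟩ := Metric.continuousAt_iff.1 hcont ε hε.1
    set r := min (min (δ/2) ε) (1 / (b + 2)) with hr
    have hr0 : 0 < r := by
      refine lt_min (lt_min (by linarith) hε.1) (by positivity)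
    have hr1 : r ≤ ε := (min_le_left _ _).trans (min_le_right _ _)
    have hr2 : r ≤ δ / 2 := (min_le_left _ _).trans (min_le_left _ _)
    have hr3 : r * (b + 2) ≤ 1 := by
      have : r ≤ 1 / (b+2) := min_le_right _ _
      rwa [le_div_iff₀ (by positivity)] at this
    have := area_aux n R r (b + ε) hr0 (by linarith [hε.2]) hR (by linarith [hε.1]) (by
      have : r * (b + ε) < 1 := by nlinarith [hε.2]
      nlinarith [hε.2, hε.1]) hn hinj (by
      intro z hz
      rw [mem_closedBall_zero_iff] at hz
      have h1 := hδ2 (x := z) (by rw [dist_zero_right]; linarith)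
      rw [dist_eq_norm] at h1
      have h2 := norm_sub_norm_le (deriv n z) (deriv n 0)
      linarith)
    refine this.trans ?_
    gcongr
  have ht : Tendsto (fun ε : ℝ => Real.pi * (1 + 2 * (b + ε) + 2 * ε ^ 2 * (b + ε) ^ 2)) (𝓝[>] 0) (𝓝 (Real.pi * (1 + 2 * (b + 0) + 2 * 0 ^ 2 * (b + 0) ^ 2))) := by
    apply tendsto_nhdsWithin_of_tendsto_nhds
    apply Continuous.tendsto
    fun_prop
  have := ge_of_tendsto ht (by filter_upwards [Ioo_mem_nhdsGT (show (0:ℝ) < 1 by norm_num)] with ε hε using key ε hε)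
  simpa using this

lemma coef_bound (n : ℂ → ℂ) (R : ℝ) (hR : 1 < R)
    (hn : DifferentiableOn ℂ n (ball 0 R))
    (hinj : InjOn (fun z => z⁻¹ + n z) (ball 0 R \ {0})) (z : ℂ) (hz : ‖z‖ < 1) :
    ‖deriv n z‖ ≤ 2.415 / (1 - ‖z‖) := by
  have h1 := area_lim n R hR hn hinj
  have hkd := hn.deriv isOpen_ball
  have h2 := mv_aux (deriv n) R hR hkd 0 (by simp)
  have h3 := mv_aux (deriv n) R hR hkd z hz
  have h4 := h2.trans h1
  have h5 := h3.trans h1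
  have hp := Real.pi_pos
  simp only [norm_zero, sub_zero, one_pow, mul_one] at h4
  rw [mul_assoc] at h5
  have h4 := le_of_mul_le_mul_left h4 hp
  have h5 := le_of_mul_le_mul_left h5 hp
  have h6 : ‖deriv n 0‖ ≤ 2.4143 := by nlinarith [norm_nonneg (deriv n 0)]
  rw [le_div_iff₀ (by linarith)]
  apply le_of_sq_le_sq _ (by norm_num)
  nlinarith

lemma b0_bound (n : ℂ → ℂ) (R : ℝ) (hR : 1 < R)
    (hn : DifferentiableOn ℂ n (ball 0 R))
    (hinj : InjOn (fun z => z⁻¹ + n z) (ball 0 R \ {0}))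
    (h0 : ∀ z ∈ ball (0:ℂ) R \ {0}, z⁻¹ + n z ≠ 0) : ‖n 0‖ ≤ 3.68 := by
  have hb : ∀ z ∈ closedBall (0:ℂ) (1/2), ‖n z - n 0‖ ≤ 3.36 * (1/2) := by
    intro z hz
    rw [mem_closedBall_zero_iff] at hz
    have hlt : ∀ t ∈ Icc (0:ℝ) 1, t * ‖z‖ ≤ 1/2 := by
      intro t ht
      nlinarith [ht.1, ht.2, norm_nonneg z]
    have hnm : ∀ t ∈ Icc (0:ℝ) 1, ‖(t:ℂ) * z‖ ≤ 1/2 := by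
      intro t ht
      rw [norm_mul, Complex.norm_real, Real.norm_of_nonneg ht.1]; exact hlt t ht
    have hd : ∀ t ∈ Icc (0:ℝ) 1, HasDerivAt (fun t : ℝ => n (t * z) - n 0) (deriv n (t * z) * z) t := by
      intro t ht
      have h1 : HasDerivAt n (deriv n (t*z)) (t*z) :=
        (hn.differentiableAt (isOpen_ball.mem_nhds (by rw [mem_ball_zero_iff]; linarith [hnm t ht]))).hasDerivAt
      have h2 : HasDerivAt (fun t : ℝ => (t:ℂ) * z) z t := by
        simpa using (Complex.ofRealCLM.hasDerivAt (x := t)).mul_const z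
      exact (h1.comp t h2).sub_const _
    have hB : ∀ t ∈ Icc (0:ℝ) 1, HasDerivAt (fun t : ℝ => -2.415 * Real.log (1 - t * ‖z‖)) (2.415 * ‖z‖ / (1 - t * ‖z‖)) t := by
      intro t ht
      have h1 : HasDerivAt (fun t : ℝ => 1 - t * ‖z‖) (-‖z‖) t := by
        simpa using ((hasDerivAt_id t).mul_const ‖z‖).const_sub 1
      exact ((h1.log (by linarith [hlt t ht])).const_mul (-2.415)).congr_deriv (by ring)
    have := image_norm_le_of_norm_deriv_right_le_deriv_boundary' (f := fun t : ℝ => n (t * z) - n 0) (a := 0) (b := 1)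
      (f' := fun t => deriv n (t * z) * z) (B := fun t : ℝ => -2.415 * Real.log (1 - t * ‖z‖))
      (B' := fun t => 2.415 * ‖z‖ / (1 - t * ‖z‖))
      (fun t ht => (hd t ht).continuousAt.continuousWithinAt)
      (fun t ht => (hd t ⟨ht.1, ht.2.le⟩).hasDerivWithinAt) (by simp)
      (fun t ht => (hB t ht).continuousAt.continuousWithinAt)
      (fun t ht => (hB t ⟨ht.1, ht.2.le⟩).hasDerivWithinAt) (by
        intro t ht
        have ht' : t ∈ Icc (0:ℝ) 1 := ⟨ht.1, ht.2.le⟩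
        have h3 := coef_bound n R hR hn hinj (t * z) (by linarith [hnm t ht'])
        have h4 : ‖(t:ℂ) * z‖ = t * ‖z‖ := by rw [norm_mul, Complex.norm_real, Real.norm_of_nonneg ht.1]
        rw [h4] at h3
        rw [norm_mul]
        calc _ ≤ 2.415 / (1 - t * ‖z‖) * ‖z‖ := by gcongr
          _ = _ := by ring)
      (show (1:ℝ) ∈ Icc (0:ℝ) 1 by simp)
    simp only [ofReal_one, one_mul] at this
    refine this.trans ?_
    have h5 : Real.log (1/2) ≤ Real.log (1 - ‖z‖) := Real.log_le_log (by norm_num) (by linarith)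
    rw [one_div, Real.log_inv] at h5
    have := Real.log_two_lt_d9
    linarith
  have := incl_gen n R (1/2) 3.36 (by norm_num) (by linarith) (by norm_num) (by norm_num) hn hb 0 (by
    intro z hz hz2
    exact h0 z ⟨by simp; linarith, hz⟩)
  simp at this
  norm_num at this ⊢
  exact this

lemma a2_bound (f : ℂ → ℂ) (R : ℝ) (hR : 1 < R) (hf : DifferentiableOn ℂ f (ball 0 R))
    (hinj : InjOn f (ball 0 R)) (h0 : deriv f 0 ≠ 0) :
    ‖deriv (deriv f) 0‖ ≤ 7.36 * ‖deriv f 0‖ := by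
  set v := dslope f 0 with hv
  have hnh : ball (0:ℂ) R ∈ 𝓝 0 := ball_mem_nhds _ (by linarith)
  have hvd : DifferentiableOn ℂ v (ball 0 R) := (Complex.differentiableOn_dslope hnh).2 hf
  have hv0 : v 0 = deriv f 0 := dslope_same _ _
  have hfv : ∀ z, f z = f 0 + z * v z := by
    intro z
    have := sub_smul_dslope f 0 z
    simp at this
    rw [hv, this]; ring
  have hvne : ∀ z ∈ ball (0:ℂ) R, v z ≠ 0 := by
    intro z hz h
    by_cases hz0 : z = 0
    · rw [hz0, hv0] at h; exact h0 h
    · apply hz0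
      apply hinj hz (mem_of_mem_nhds hnh)
      rw [hfv z, h]; simp
  set N := fun z => v 0 / v z with hN
  have hNd : DifferentiableOn ℂ N (ball 0 R) := (differentiableOn_const _).div hvd hvne
  have hN0 : N 0 = 1 := div_self (hvne 0 (mem_of_mem_nhds hnh))
  set n := dslope N 0 with hn
  have hnd : DifferentiableOn ℂ n (ball 0 R) := (Complex.differentiableOn_dslope hnh).2 hNd
  have hn0 : n 0 = deriv N 0 := dslope_same _ _
  have hNn : ∀ z, N z = 1 + z * n z := by
    intro z
    have := sub_smul_dslope N 0 z
    simp at this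
    rw [hn, this, hN0]; ring
  have hh : ∀ z, z ≠ 0 → z⁻¹ + n z = v 0 / (z * v z) := by
    intro z hz
    have := hNn z
    have h2 : z⁻¹ + n z = N z / z := by rw [this]; field_simp
    rw [h2, hN]; simp only; rw [div_div, mul_comm]
  have hb := b0_bound n R hR hnd (by
    rintro x ⟨hx, hx0⟩ y ⟨hy, hy0⟩ hxy
    have hx0 : x ≠ 0 := hx0
    have hy0 : y ≠ 0 := hy0
    simp only at hxy
    rw [hh x hx0, hh y hy0] at hxy
    apply hinj hx hy
    rw [hfv x, hfv y]
    have h1 := hvne x hx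
    have h2 := hvne y hy
    have h3 := hvne 0 (mem_of_mem_nhds hnh)
    field_simp at hxy
    rw [hxy]) (by
    rintro x ⟨hx, hx0⟩
    rw [hh x hx0]
    exact div_ne_zero (hvne 0 (mem_of_mem_nhds hnh)) (mul_ne_zero hx0 (hvne x hx)))
  have hva : ∀ z ∈ ball (0:ℂ) R, HasDerivAt v (deriv v z) z := fun z hz =>
    (hvd.differentiableAt (isOpen_ball.mem_nhds hz)).hasDerivAt
  have hdN : deriv N 0 = - deriv v 0 / v 0 := by
    have := (hasDerivAt_const (0:ℂ) (v 0)).div (hva 0 (mem_of_mem_nhds hnh)) (hvne 0 (mem_of_mem_nhds hnh))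
    have h2 : deriv N 0 = _ := this.deriv
    have h3 := hvne 0 (mem_of_mem_nhds hnh)
    rw [h2]; field_simp; ring
  have hdf : deriv f =ᶠ[𝓝 0] fun z => v z + z * deriv v z := by
    filter_upwards [hnh] with z hz
    have h1 := ((hasDerivAt_id z).mul (hva z hz)).const_add (f 0)
    have h2 : f = fun z => f 0 + z * v z := funext hfv
    rw [h2]
    exact h1.deriv.trans (by simp)
  have hddf : deriv (deriv f) 0 = 2 * deriv v 0 := by
    rw [hdf.deriv_eq]
    have h1 : HasDerivAt (deriv v) (deriv (deriv v) 0) 0 :=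
      ((hvd.deriv isOpen_ball).differentiableAt hnh).hasDerivAt
    have := (hva 0 (mem_of_mem_nhds hnh)).add ((hasDerivAt_id (0:ℂ)).mul h1)
    refine this.deriv.trans ?_
    simp; ring
  rw [hn0, hdN, norm_div, norm_neg, div_le_iff₀ (norm_pos_iff.2 (hv0 ▸ h0))] at hb
  rw [hddf, norm_mul, ← hv0]
  simp
  linarith

lemma lray_closed (θ : ℝ) : IsClosed (lray θ) := by
  have : lray θ = {z : ℂ | (z * exp (-(θ * I))).im = 0} ∩ {z : ℂ | 0 ≤ (z * exp (-(θ * I))).re} := by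
    ext z
    constructor
    · rintro ⟨t, ht, rfl⟩
      have : (t : ℂ) * exp (θ * I) * exp (-(θ * I)) = t := by
        rw [mul_assoc, ← Complex.exp_add]; simp
      constructor <;> rw [mem_ofPred_eq, this] <;> simp [ht]
    · rintro ⟨h1, h2⟩
      refine ⟨_, h2, ?_⟩
      have h3 : (((z * exp (-(θ * I))).re : ℝ) : ℂ) = z * exp (-(θ * I)) := by
        apply Complex.ext
        · simp
        · simpa using h1.symm
      rw [h3, mul_assoc, ← Complex.exp_add]; simp
  rw [this]
  apply IsClosed.inter
  · exact isClosed_eq (by fun_prop) continuous_const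
  · exact isClosed_le continuous_const (by fun_prop)

lemma slit_open (θ : ℝ) (r : ℝ) : IsOpen (ball (0:ℂ) r \ lray θ) := isOpen_ball.sdiff (lray_closed θ)

lemma slit_ne (θ : ℝ) (z : ℂ) (hz : z ∉ lray θ) : z ≠ 0 := by
  rintro rfl; exact hz ⟨0, le_rfl, by simp⟩

lemma deriv_L (θ : ℝ) (L : ℂ → ℂ) (hL : DifferentiableOn ℂ L (ball (0 : ℂ) 1 \ lray θ))
    (he : ∀ z ∈ ball (0 : ℂ) 1 \ lray θ, Complex.exp (L z) = z) (z : ℂ) (hz : z ∈ ball (0 : ℂ) 1 \ lray θ) :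
    HasDerivAt L z⁻¹ z := by
  have h1 := (hL.differentiableAt ((slit_open θ 1).mem_nhds hz)).hasDerivAt
  have h2 := h1.cexp
  have h3 : HasDerivAt (fun z => exp (L z)) 1 z := by
    apply (hasDerivAt_id z).congr_of_eventuallyEq
    filter_upwards [(slit_open θ 1).mem_nhds hz] with w hw using he w hw
  have h4 := h2.unique h3
  rw [he z hz] at h4
  have : deriv L z = z⁻¹ := eq_inv_of_mul_eq_one_right h4
  rwa [this] at h1

lemma phi_deriv (g : ℂ → ℂ) (κ : ℂ)
    (hg : DifferentiableOn ℂ g (ball (0 : ℂ) 1 \ {0})) (θ : ℝ) (L : ℂ → ℂ) (hL : DifferentiableOn ℂ L (ball (0 : ℂ) 1 \ lray θ))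
    (he : ∀ z ∈ ball (0 : ℂ) 1 \ lray θ, Complex.exp (L z) = z) (z : ℂ) (hz : z ∈ ball (0 : ℂ) 1 \ lray θ) :
    HasDerivAt (fun z => g z + κ * L z) (deriv g z + κ * z⁻¹) z := by
  apply HasDerivAt.add
  · exact (hg.differentiableAt ((isOpen_ball.sdiff isClosed_singleton).mem_nhds ⟨hz.1, slit_ne θ z hz.2⟩)).hasDerivAt
  · exact (deriv_L θ L hL he z hz).const_mul κ

lemma P_bound_ne (g : ℂ → ℂ) (κ : ℂ)
    (hg : DifferentiableOn ℂ g (ball (0 : ℂ) 1 \ {0}))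
    (hyp : ∀ θ : ℝ, ∃ L : ℂ → ℂ,
      DifferentiableOn ℂ L (ball (0 : ℂ) 1 \ lray θ) ∧
      (∀ z ∈ ball (0 : ℂ) 1 \ lray θ, Complex.exp (L z) = z) ∧
      InjOn (fun z => g z + κ * L z) (ball (0 : ℂ) 1 \ lray θ))
    (p : ℂ) (hp0 : p ≠ 0) (hp : ‖p‖ < 1 / 2500) (hP : p * deriv g p + κ ≠ 0) :
    ‖p * deriv (fun z => z * deriv g z + κ) p‖ ≤ (97 / 50) * ‖p * deriv g p + κ‖ := by
  obtain ⟨L, hL, he, hinj⟩ := hyp (arg p + Real.pi)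
  set θ := arg p + Real.pi with hθ
  have hDo : IsOpen (ball (0:ℂ) 1 \ {0}) := isOpen_ball.sdiff isClosed_singleton
  set P := fun z => z * deriv g z + κ with hPdef
  have hPd : DifferentiableOn ℂ P (ball (0 : ℂ) 1 \ {0}) := by
    have := hg.deriv hDo
    fun_prop
  obtain ⟨s, hs⟩ : ∃ s : ℂ, s = 19 / 20 := ⟨_, rfl⟩
  obtain ⟨R, hR⟩ : ∃ R : ℝ, R = 101 / 100 := ⟨_, rfl⟩
  have hsz : ∀ z ∈ ball (0:ℂ) R, ‖s * z‖ < 24 / 25 := by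
    intro z hz
    rw [mem_ball_zero_iff] at hz
    have : ‖s‖ = 19 / 20 := by rw [hs]; norm_num
    rw [norm_mul, this]
    rw [hR] at hz
    norm_num at hz ⊢; linarith
  have hre : ∀ z ∈ ball (0:ℂ) R, |(s * z).re| < 24 / 25 := fun z hz => (abs_re_le_norm _).trans_lt (hsz z hz)
  have hd1 : ∀ z ∈ ball (0:ℂ) R, 1 - s * z ≠ 0 := by
    intro z hz h
    have h1 := congrArg re h
    have := (abs_lt.1 (hre z hz)).2
    simp only [sub_re, one_re, zero_re] at h1
    linarith
  have hd2 : ∀ z ∈ ball (0:ℂ) R, 1 + s * z ≠ 0 := by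
    intro z hz h
    have h1 := congrArg re h
    have := (abs_lt.1 (hre z hz)).1
    simp only [add_re, one_re, zero_re] at h1
    linarith
  set w : ℂ → ℂ := fun z => (1 + s * z) / (1 - s * z) with hw
  have hwre : ∀ z ∈ ball (0:ℂ) R, 0 < (w z).re := by
    intro z hz
    have h1 : 0 < normSq (1 - s * z) := normSq_pos.2 (hd1 z hz)
    have h2 : normSq (s * z) < 1 := by
      rw [normSq_eq_norm_sq]
      have := hsz z hz
      nlinarith [norm_nonneg (s * z)]
    rw [normSq_apply] at h2
    simp only [hw, div_re, add_re, add_im, sub_re, sub_im, one_re, one_im]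
    rw [← add_div]
    apply div_pos _ h1
    nlinarith
  have hwn : ∀ z ∈ ball (0:ℂ) R, ‖w z‖ ≤ 49 := by
    intro z hz
    have h1 := hsz z hz
    have h2 : ‖1 + s * z‖ ≤ 49 / 25 := (norm_add_le _ _).trans (by rw [norm_one]; linarith)
    have h3 : 1 / 25 ≤ ‖1 - s * z‖ := by
      have := norm_sub_norm_le 1 (s * z)
      rw [norm_one] at this; linarith
    rw [hw]; simp only
    rw [norm_div, div_le_iff₀ (by linarith)]
    linarith
  set m : ℂ → ℂ := fun z => p * (w z) ^ 2 with hm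
  have hmaps : ∀ z ∈ ball (0:ℂ) R, m z ∈ ball (0:ℂ) 1 \ lray θ := by
    intro z hz
    constructor
    · rw [mem_ball_zero_iff, hm]; simp only
      rw [norm_mul, norm_pow]
      have := hwn z hz
      have h2 : ‖w z‖^2 ≤ 49^2 := by gcongr
      nlinarith [norm_nonneg p]
    · rintro ⟨t, ht, h⟩
      have hpe : p = ‖p‖ * exp (arg p * I) := (norm_mul_exp_arg_mul_I p).symm
      have h3 : exp (θ * I) = - exp (arg p * I) := by
        rw [hθ]; push_cast; rw [add_mul, Complex.exp_add, Complex.exp_pi_mul_I]; ring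
      simp only [hm] at h
      rw [h3] at h
      have h4 : (‖p‖ : ℂ) * (w z)^2 = ((-t : ℝ) : ℂ) := by
        have h5 := Complex.exp_ne_zero (arg p * I)
        apply mul_right_cancel₀ h5
        push_cast
        calc _ = (‖p‖ * exp (arg p * I)) * w z ^ 2 := by ring
          _ = _ := by rw [← hpe, h]; ring
      have hpn : 0 < ‖p‖ := norm_pos_iff.2 hp0
      have him := congrArg im h4
      have hre' := congrArg re h4
      rw [im_ofReal_mul, ofReal_im] at him
      rw [re_ofReal_mul, ofReal_re] at hre'
      have h6 : ((w z)^2).im = 0 := by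
        rcases mul_eq_zero.1 him with h | h
        · linarith
        · exact h
      have h7 : ((w z)^2).re ≤ 0 := by
        by_contra! hcon
        have := mul_pos hpn hcon
        linarith
      have h8 := hwre z hz
      rw [pow_two, mul_im] at h6
      rw [pow_two, mul_re] at h7
      have h9 : (w z).im = 0 := by
        have : (w z).re * (w z).im = 0 := by linarith
        rcases mul_eq_zero.1 this with h | h
        · linarith
        · exact h
      rw [h9] at h7
      nlinarith
  have hminj : InjOn m (ball 0 R) := by
    intro x hx y hy hxy
    have h1 : (w x)^2 = (w y)^2 := mul_left_cancel₀ hp0 hxy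
    have h2 : w x = w y := by
      rcases sq_eq_sq_iff_eq_or_eq_neg.1 h1 with h | h
      · exact h
      · have h3 := hwre x hx
        have h4 := hwre y hy
        rw [h, neg_re] at h3
        linarith
    simp only [hw] at h2
    rw [div_eq_div_iff (hd1 x hx) (hd1 y hy)] at h2
    have hs0 : s ≠ 0 := by rw [hs]; norm_num
    have : (2 * s) * x = (2 * s) * y := by linear_combination h2
    exact mul_left_cancel₀ (mul_ne_zero two_ne_zero hs0) this
  have hmd : ∀ z ∈ ball (0:ℂ) R, HasDerivAt m (m z * (4 * s / ((1 - s * z) * (1 + s * z)))) z := by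
    intro z hz
    have h1 : HasDerivAt (fun z => 1 + s * z) s z := by simpa using ((hasDerivAt_id z).const_mul s).const_add 1
    have h2 : HasDerivAt (fun z => 1 - s * z) (-s) z := by simpa using ((hasDerivAt_id z).const_mul s).const_sub 1
    have h3 := ((h1.div h2 (hd1 z hz)).pow 2).const_mul p
    refine h3.congr_deriv ?_
    have := hd1 z hz
    have := hd2 z hz
    simp only [hm, hw, Pi.div_apply]
    generalize ha : 1 - s * z = a at *
    have hb : 1 + s * z = 2 - a := by rw [← ha]; ring
    rw [hb] at *
    norm_num
    field_simp
    ring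
  set f : ℂ → ℂ := fun z => g (m z) + κ * L (m z) with hf
  have hfd : ∀ z ∈ ball (0:ℂ) R, HasDerivAt f (P (m z) * (4 * s / ((1 - s * z) * (1 + s * z)))) z := by
    intro z hz
    have h1 := (phi_deriv g κ hg θ L hL he _ (hmaps z hz)).comp z (hmd z hz)
    refine h1.congr_deriv ?_
    have := slit_ne θ _ (hmaps z hz).2
    simp only [hPdef]
    field_simp
  have hfinj : InjOn f (ball 0 R) := hinj.comp hminj hmaps
  have h0R : (0:ℂ) ∈ ball (0:ℂ) R := mem_ball_self (by norm_num [hR])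
  have hm0 : m 0 = p := by simp [hm, hw]
  have hf0 : deriv f 0 = 4 * s * P p := by
    rw [(hfd 0 h0R).deriv, hm0]; simp; ring
  have hs0 : s ≠ 0 := by rw [hs]; norm_num
  have hff0 : deriv (deriv f) 0 = 16 * s^2 * (p * deriv P p) := by
    have e : deriv f =ᶠ[𝓝 0] fun z => P (m z) * (4 * s / ((1 - s * z) * (1 + s * z))) := by
      filter_upwards [isOpen_ball.mem_nhds h0R] with z hz using (hfd z hz).deriv
    rw [e.deriv_eq]
    have hPp : HasDerivAt P (deriv P (m 0)) (m 0) :=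
      (hPd.differentiableAt (hDo.mem_nhds ⟨(hmaps 0 h0R).1, slit_ne θ _ (hmaps 0 h0R).2⟩)).hasDerivAt
    have h1 := hPp.comp 0 (hmd 0 h0R)
    have h4 : HasDerivAt (fun z => 1 + s * z) s 0 := by simpa using ((hasDerivAt_id (0:ℂ)).const_mul s).const_add 1
    have h2 : HasDerivAt (fun z => 1 - s * z) (-s) 0 := by simpa using ((hasDerivAt_id (0:ℂ)).const_mul s).const_sub 1
    have h3 := h1.mul ((hasDerivAt_const (0:ℂ) (4 * s)).div (h2.mul h4) (mul_ne_zero (hd1 0 h0R) (hd2 0 h0R)))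
    refine h3.deriv.trans ?_
    simp [hm0]
    ring
  have hb := a2_bound f R (by norm_num [hR]) (fun z hz => (hfd z hz).differentiableAt.differentiableWithinAt) hfinj
    (by rw [hf0]; exact mul_ne_zero (mul_ne_zero (by norm_num) hs0) hP)
  have hsn : ‖s‖ = 19 / 20 := by rw [hs]; norm_num
  rw [hf0, hff0] at hb
  simp only [norm_mul, norm_pow, hsn] at hb
  rw [norm_mul]
  change _ ≤ (97 / 50) * ‖P p‖
  norm_num at hb ⊢
  linarith [norm_nonneg (P p)]

lemma P_bound (g : ℂ → ℂ) (κ : ℂ)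
    (hg : DifferentiableOn ℂ g (ball (0 : ℂ) 1 \ {0}))
    (hyp : ∀ θ : ℝ, ∃ L : ℂ → ℂ,
      DifferentiableOn ℂ L (ball (0 : ℂ) 1 \ lray θ) ∧
      (∀ z ∈ ball (0 : ℂ) 1 \ lray θ, Complex.exp (L z) = z) ∧
      InjOn (fun z => g z + κ * L z) (ball (0 : ℂ) 1 \ lray θ))
    (p : ℂ) (hp0 : p ≠ 0) (hp : ‖p‖ < 1 / 2500) :
    ‖p * deriv (fun z => z * deriv g z + κ) p‖ ≤ (97 / 50) * ‖p * deriv g p + κ‖ := by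
  have hDo : IsOpen (ball (0:ℂ) 1 \ {0}) := isOpen_ball.sdiff isClosed_singleton
  have hPd : DifferentiableOn ℂ (fun z => z * deriv g z + κ) (ball (0 : ℂ) 1 \ {0}) := by
    have := hg.deriv hDo
    fun_prop
  have hpD : p ∈ ball (0:ℂ) 1 \ {0} := ⟨by rw [mem_ball_zero_iff]; linarith, hp0⟩
  have hev : ∀ᶠ z in 𝓝 p, z ≠ 0 ∧ ‖z‖ < 1 / 2500 := by
    refine (eventually_ne_nhds hp0).and ?_
    exact (continuous_norm.tendsto p).eventually (eventually_lt_nhds hp)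
  have hb : ∀ z, z ≠ 0 → ‖z‖ < 1 / 2500 → z * deriv g z + κ ≠ 0 → ‖z * deriv (fun z => z * deriv g z + κ) z‖ ≤ (97 / 50) * ‖z * deriv g z + κ‖ :=
    fun z h1 h2 h3 => P_bound_ne g κ hg hyp z h1 h2 h3
  have e1 : p * deriv g p + κ = (fun z => z * deriv g z + κ) p := rfl
  rw [e1]
  have hb' : ∀ z, z ≠ 0 → ‖z‖ < 1 / 2500 → (fun z => z * deriv g z + κ) z ≠ 0 → ‖z * deriv (fun z => z * deriv g z + κ) z‖ ≤ (97 / 50) * ‖(fun z => z * deriv g z + κ) z‖ := hb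
  generalize (fun z => z * deriv g z + κ) = P at *
  have hPa : AnalyticAt ℂ P p := hPd.analyticAt (hDo.mem_nhds hpD)
  have hPa' : AnalyticAt ℂ (deriv P) p := hPa.deriv
  rcases hPa.eventually_eq_zero_or_eventually_ne_zero with h | h
  · have h2 : P =ᶠ[𝓝 p] fun _ => 0 := h
    rw [h2.deriv_eq]; simp
  · have c1 : Tendsto (fun z => ‖z * deriv P z‖) (𝓝[≠] p) (𝓝 ‖p * deriv P p‖) :=
      ((continuousAt_id.mul hPa'.continuousAt).norm.tendsto).mono_left nhdsWithin_le_nhds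
    have c2 : Tendsto (fun z => (97 / 50) * ‖P z‖) (𝓝[≠] p) (𝓝 ((97 / 50) * ‖P p‖)) :=
      ((continuousAt_const.mul hPa.continuousAt.norm).tendsto).mono_left nhdsWithin_le_nhds
    refine le_of_tendsto_of_tendsto c1 c2 ?_
    filter_upwards [h, nhdsWithin_le_nhds hev] with z h1 h2 using hb' z h2.1 h2.2 h1

lemma radial_deriv (f : ℂ → ℂ) (hf : DifferentiableOn ℂ f (ball (0 : ℂ) 1 \ {0})) (u : ℂ) (hu0 : u ≠ 0)
    (hu : ‖u‖ < 1) (x : ℝ) (hx : 0 ≤ x) :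
    HasDerivAt (fun x : ℝ => f ((Real.exp (-x) : ℝ) * u)) (-(((Real.exp (-x) : ℝ) * u) * deriv f ((Real.exp (-x) : ℝ) * u))) x := by
  have hDo : IsOpen (ball (0:ℂ) 1 \ {0}) := isOpen_ball.sdiff isClosed_singleton
  have hm : ((Real.exp (-x) : ℝ) * u : ℂ) ∈ ball (0:ℂ) 1 \ {0} := by
    constructor
    · rw [mem_ball_zero_iff, norm_mul, norm_real, Real.norm_of_nonneg (Real.exp_pos _).le]
      have : Real.exp (-x) ≤ 1 := Real.exp_le_one_iff.2 (by linarith)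
      nlinarith [norm_nonneg u]
    · rw [mem_singleton_iff]
      exact mul_ne_zero (by exact_mod_cast (Real.exp_pos _).ne') hu0
  have h1 := (hf.differentiableAt (hDo.mem_nhds hm)).hasDerivAt
  have h2 : HasDerivAt (fun x : ℝ => ((Real.exp (-x) : ℝ) * u : ℂ)) (-((Real.exp (-x) : ℝ) * u)) x := by
    have h3 : HasDerivAt (fun x : ℝ => Real.exp (-x)) (-Real.exp (-x)) x := by
      simpa using (hasDerivAt_neg x).exp
    have h4 := h3.ofReal_comp.mul_const u
    refine h4.congr_deriv ?_
    push_cast; ring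
  have h5 := h1.comp x h2
  refine h5.congr_deriv ?_
  ring

lemma growth (g : ℂ → ℂ) (κ : ℂ) (q δ : ℝ) (hq0 : 0 < q) (hδ0 : 0 < δ) (hδ1 : δ < 1)
    (hg : DifferentiableOn ℂ g (ball (0 : ℂ) 1 \ {0}))
    (hb : ∀ p : ℂ, p ≠ 0 → ‖p‖ ≤ δ →
    ‖p * deriv (fun z => z * deriv g z + κ) p‖ ≤ q * ‖p * deriv g p + κ‖) :
    ∃ C : ℝ, 0 ≤ C ∧ ∀ u : ℂ, ‖u‖ = δ → ∀ x : ℝ, 0 ≤ x → ‖g ((Real.exp (-x) : ℝ) * u)‖ ≤ C * Real.exp (q * x) := by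
  have hDo : IsOpen (ball (0:ℂ) 1 \ {0}) := isOpen_ball.sdiff isClosed_singleton
  obtain ⟨P, hP⟩ : ∃ P : ℂ → ℂ, P = fun z => z * deriv g z + κ := ⟨_, rfl⟩
  have hPd : DifferentiableOn ℂ P (ball (0 : ℂ) 1 \ {0}) := by
    have := hg.deriv hDo
    rw [hP]
    fun_prop
  have hb' : ∀ p : ℂ, p ≠ 0 → ‖p‖ ≤ δ → ‖p * deriv P p‖ ≤ q * ‖P p‖ := by
    rw [hP]; exact hb
  have hsub : sphere (0:ℂ) δ ⊆ ball (0:ℂ) 1 \ {0} := by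
    intro z hz
    rw [mem_sphere_zero_iff_norm] at hz
    refine ⟨by rw [mem_ball_zero_iff]; linarith, ?_⟩
    rintro rfl
    simp at hz; linarith
  obtain ⟨C1, hC1⟩ := (isCompact_sphere (0:ℂ) δ).exists_bound_of_continuousOn (hPd.continuousOn.mono hsub)
  obtain ⟨C0, hC0⟩ := (isCompact_sphere (0:ℂ) δ).exists_bound_of_continuousOn (hg.continuousOn.mono hsub)
  have hex : ∃ u : ℂ, ‖u‖ = δ := ⟨δ, by rw [norm_real, Real.norm_of_nonneg hδ0.le]⟩
  have hC1n : 0 ≤ C1 := by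
    obtain ⟨u, hu⟩ := hex
    exact (norm_nonneg _).trans (hC1 u (by simpa using hu))
  have hC0n : 0 ≤ C0 := by
    obtain ⟨u, hu⟩ := hex
    exact (norm_nonneg _).trans (hC0 u (by simpa using hu))
  have hK : 0 ≤ (C1 + ‖κ‖) / q := by positivity
  refine ⟨C0 + (C1 + ‖κ‖) / q, by positivity, ?_⟩
  intro u hu x hx
  have hu0 : u ≠ 0 := by rintro rfl; simp at hu; linarith
  have hu1 : ‖u‖ < 1 := by linarith
  have hz : ∀ y : ℝ, 0 ≤ y → ((Real.exp (-y) : ℝ) * u : ℂ) ≠ 0 ∧ ‖((Real.exp (-y) : ℝ) * u : ℂ)‖ ≤ δ := by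
    intro y hy
    refine ⟨mul_ne_zero (by exact_mod_cast (Real.exp_pos _).ne') hu0, ?_⟩
    rw [norm_mul, norm_real, Real.norm_of_nonneg (Real.exp_pos _).le, hu]
    have : Real.exp (-y) ≤ 1 := Real.exp_le_one_iff.2 (by linarith)
    nlinarith
  have g1 : ∀ y ∈ Icc 0 x, ‖P ((Real.exp (-y) : ℝ) * u)‖ ≤ C1 * Real.exp (q * y) := by
    intro y hy
    have := norm_le_gronwallBound_of_norm_deriv_right_le (a := 0) (b := x) (δ := C1) (K := q) (ε := 0)
      (f := fun x : ℝ => P ((Real.exp (-x) : ℝ) * u))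
      (fun y hy => (radial_deriv P hPd u hu0 hu1 y hy.1).continuousAt.continuousWithinAt)
      (fun y hy => (radial_deriv P hPd u hu0 hu1 y hy.1).hasDerivWithinAt)
      (by simpa using hC1 u (by simpa using hu))
      (fun y hy => by rw [norm_neg, add_zero]; exact hb' _ (hz y hy.1).1 (hz y hy.1).2) y hy
    rwa [gronwallBound_ε0, sub_zero] at this
  have g2 := image_norm_le_of_norm_deriv_right_le_deriv_boundary' (a := 0) (b := x)
      (f := fun x : ℝ => g ((Real.exp (-x) : ℝ) * u))
      (fun y hy => (radial_deriv g hg u hu0 hu1 y hy.1).continuousAt.continuousWithinAt)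
      (fun y hy => (radial_deriv g hg u hu0 hu1 y hy.1).hasDerivWithinAt)
      (B := fun y => C0 + (C1 + ‖κ‖) / q * Real.exp (q * y))
      (B' := fun y => (C1 + ‖κ‖) * Real.exp (q * y))
      (by 
        have := hC0 u (by simpa using hu)
        simp only [neg_zero, Real.exp_zero, ofReal_one, one_mul, mul_zero, mul_one]
        linarith)
      (by fun_prop)
      (fun y hy => by
        have h1 : HasDerivAt (fun y : ℝ => q * y) q y := by simpa using (hasDerivAt_id y).const_mul q
        have h2 := (h1.exp.const_mul ((C1 + ‖κ‖) / q)).const_add C0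
        refine HasDerivAt.hasDerivWithinAt (h2.congr_deriv ?_)
        field_simp)
      (fun y hy => by
        rw [norm_neg]
        have h1 := g1 y ⟨hy.1, hy.2.le⟩
        have h2 : ∀ z, z * deriv g z = P z - κ := by intro z; rw [hP]; ring
        rw [h2]
        have h3 : 1 ≤ Real.exp (q * y) := Real.one_le_exp (mul_nonneg hq0.le hy.1)
        have := norm_sub_le (P ((Real.exp (-y) : ℝ) * u)) κ
        nlinarith [norm_nonneg κ]) (right_mem_Icc.2 hx)
  refine g2.trans ?_
  have h3 : 1 ≤ Real.exp (q * x) := Real.one_le_exp (mul_nonneg hq0.le hx)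
  nlinarith

lemma zg_lim (g : ℂ → ℂ) (κ : ℂ) (q δ : ℝ) (hq0 : 0 < q) (hq2 : q < 2) (hδ0 : 0 < δ) (hδ1 : δ < 1)
    (hg : DifferentiableOn ℂ g (ball (0 : ℂ) 1 \ {0}))
    (hb : ∀ p : ℂ, p ≠ 0 → ‖p‖ ≤ δ →
    ‖p * deriv (fun z => z * deriv g z + κ) p‖ ≤ q * ‖p * deriv g p + κ‖) :
    Tendsto (fun z => z * (z * g z)) (𝓝[≠] 0) (𝓝 0) := by
  obtain ⟨C, hC, h⟩ := growth g κ q δ hq0 hδ0 hδ1 hg hb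
  have ht : Tendsto (fun z : ℂ => C * Real.exp ((2 - q) * Real.log (‖z‖ / δ)) * δ ^ 2) (𝓝[≠] 0) (𝓝 0) := by
    have h1 : Tendsto (fun z : ℂ => ‖z‖ / δ) (𝓝[≠] 0) (𝓝[≠] 0) := by
      refine tendsto_nhdsWithin_iff.2 ⟨?_, ?_⟩
      · have : Continuous (fun z : ℂ => ‖z‖ / δ) := by fun_prop
        have := this.tendsto 0
        simp only [norm_zero, zero_div] at this
        exact this.mono_left nhdsWithin_le_nhds
      · filter_upwards [self_mem_nhdsWithin] with z hz
        exact (div_pos (norm_pos_iff.2 hz) hδ0).ne'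
    have h2 := (Real.tendsto_log_nhdsNE_zero.comp h1).const_mul_atBot (show 0 < 2 - q by linarith)
    have h3 := ((Real.tendsto_exp_atBot.comp h2).const_mul C).mul_const (δ ^ 2)
    simpa using h3
  refine squeeze_zero_norm' ?_ ht
  have hev : ∀ᶠ z : ℂ in 𝓝[≠] 0, ‖z‖ < δ := by
    apply nhdsWithin_le_nhds
    filter_upwards [ball_mem_nhds (0:ℂ) hδ0] with z hz using by simpa using hz
  filter_upwards [hev, self_mem_nhdsWithin] with z h1 h2
  have hzp : 0 < ‖z‖ := norm_pos_iff.2 h2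
  have hl : Real.log (‖z‖ / δ) ≤ 0 := Real.log_nonpos (by positivity) ((div_le_one hδ0).2 h1.le)
  have he : Real.exp (Real.log (‖z‖ / δ)) = ‖z‖ / δ := Real.exp_log (by positivity)
  have hu : z = ((Real.exp (-(-Real.log (‖z‖ / δ))) : ℝ) : ℂ) * ((δ / ‖z‖ : ℝ) * z) := by
    rw [neg_neg, he, ← mul_assoc, ← ofReal_mul]
    rw [show ‖z‖ / δ * (δ / ‖z‖) = 1 by field_simp]; simp
  have h5 := h ((δ / ‖z‖ : ℝ) * z) (by
    rw [norm_mul, norm_real, Real.norm_of_nonneg (by positivity)]; field_simp) (-Real.log (‖z‖ / δ)) (by linarith)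
  rw [← hu] at h5
  rw [norm_mul, norm_mul]
  have h6 : ‖z‖ = δ * Real.exp (Real.log (‖z‖ / δ)) := by rw [he]; field_simp
  generalize Real.log (‖z‖ / δ) = l at *
  rw [h6]
  calc _ ≤ δ * Real.exp l * (δ * Real.exp l * (C * Real.exp (q * -l))) := by gcongr
    _ = C * (Real.exp l * Real.exp l * Real.exp (q * -l)) * δ ^ 2 := by ring
    _ = _ := by rw [← Real.exp_add, ← Real.exp_add]; ring_nf

lemma part1 (g : ℂ → ℂ) (κ : ℂ)
    (hg : DifferentiableOn ℂ g (ball (0 : ℂ) 1 \ {0}))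
    (hyp : ∀ θ : ℝ, ∃ L : ℂ → ℂ,
      DifferentiableOn ℂ L (ball (0 : ℂ) 1 \ lray θ) ∧
      (∀ z ∈ ball (0 : ℂ) 1 \ lray θ, Complex.exp (L z) = z) ∧
      InjOn (fun z => g z + κ * L z) (ball (0 : ℂ) 1 \ lray θ)) :
    ∃ a : ℂ, ∃ G : ℂ → ℂ,
      DifferentiableOn ℂ G (ball (0 : ℂ) 1) ∧
      (∀ z ∈ ball (0 : ℂ) 1 \ {0}, g z = a / z + G z) := by
  have hlim := zg_lim g κ (97 / 50) (1 / 3000) (by norm_num) (by norm_num) (by norm_num) (by norm_num) hg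
    (fun p h0 h1 => P_bound g κ hg hyp p h0 (h1.trans_lt (by norm_num)))
  have hn : ball (0:ℂ) 1 ∈ 𝓝 (0:ℂ) := ball_mem_nhds _ one_pos
  have hH := Complex.differentiableOn_update_limUnder_of_isLittleO (f := fun z => z * g z) hn
    (by fun_prop) (by
      apply Asymptotics.isLittleO_of_tendsto'
      · filter_upwards [self_mem_nhdsWithin] with z hz h0
        simp at h0
        exact absurd h0 hz
      · refine hlim.congr fun z => ?_
        simp; ring)
  generalize hlm : limUnder (𝓝[≠] (0:ℂ)) (fun z => z * g z) = a at hH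
  refine ⟨a, dslope (Function.update (fun z => z * g z) 0 a) 0, (Complex.differentiableOn_dslope hn).2 hH, ?_⟩
  rintro z ⟨hz, hz0⟩
  have hz0 : z ≠ 0 := hz0
  rw [dslope_of_ne _ hz0, slope_def_field]
  simp [Function.update_of_ne hz0]
  field_simp
  ring

lemma part2 (g : ℂ → ℂ) (κ a : ℂ) (G : ℂ → ℂ)
    (hg : DifferentiableOn ℂ g (ball (0 : ℂ) 1 \ {0}))
    (hG : DifferentiableOn ℂ G (ball (0 : ℂ) 1))
    (hgG : ∀ z ∈ ball (0 : ℂ) 1 \ {0}, g z = a / z + G z) (ha : a ≠ 0)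
    (θ : ℝ) (L : ℂ → ℂ) (hL : DifferentiableOn ℂ L (ball (0 : ℂ) 1 \ lray θ))
    (he : ∀ z ∈ ball (0 : ℂ) 1 \ lray θ, Complex.exp (L z) = z) :
    ∃ ρ : ℝ, 0 < ρ ∧ ρ < 1 ∧
          (∀ z ∈ ball (0 : ℂ) ρ \ lray θ, deriv (fun w => g w + κ * L w) z ≠ 0) ∧
          ∃ h : ℂ → ℂ, DifferentiableOn ℂ h (ball (0 : ℂ) ρ) ∧
            ∀ z ∈ ball (0 : ℂ) ρ \ lray θ,
              h z = schwarzian (fun w => g w + κ * L w) z + 2 * κ / (a * z) := by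
  have hDo : IsOpen (ball (0:ℂ) 1 \ {0}) := isOpen_ball.sdiff isClosed_singleton
  have hG' : DifferentiableOn ℂ (deriv G) (ball 0 1) := hG.deriv isOpen_ball
  obtain ⟨u, hu⟩ : ∃ u : ℂ → ℂ, u = fun z => -a + κ * z + z ^ 2 * deriv G z := ⟨_, rfl⟩
  have hud : DifferentiableOn ℂ u (ball 0 1) := by rw [hu]; fun_prop
  have hu0 : u 0 = -a := by simp [hu]
  have h01 : (0:ℂ) ∈ ball (0:ℂ) 1 := mem_ball_self one_pos
  have huc : ContinuousAt u 0 := (hud.differentiableAt (isOpen_ball.mem_nhds h01)).continuousAt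
  have hev : ∀ᶠ z in 𝓝 (0:ℂ), u z ≠ 0 := huc.eventually_ne (by rw [hu0]; exact neg_ne_zero.2 ha)
  obtain ⟨ε, hε, hball⟩ := Metric.eventually_nhds_iff_ball.1 hev
  obtain ⟨ρ, hρ⟩ : ∃ ρ : ℝ, ρ = min ε (1 / 2) := ⟨_, rfl⟩
  have hρ0 : 0 < ρ := by rw [hρ]; positivity
  have hρ1 : ρ < 1 := by rw [hρ]; exact (min_le_right _ _).trans_lt (by norm_num)
  have hune : ∀ z ∈ ball (0:ℂ) ρ, u z ≠ 0 := fun z hz => hball z (ball_subset_ball (hρ ▸ min_le_left _ _) hz)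
  have hb1 : ball (0:ℂ) ρ ⊆ ball 0 1 := ball_subset_ball hρ1.le
  -- derivative of phi
  have hphi : ∀ z ∈ ball (0:ℂ) 1 \ lray θ, deriv (fun w => g w + κ * L w) z = u z / z ^ 2 := by
    intro z hz
    have hz0 := slit_ne θ z hz.2
    rw [(phi_deriv g κ hg θ L hL he z hz).deriv]
    have hg' : HasDerivAt g (-a / z ^ 2 + deriv G z) z := by
      have h1 : HasDerivAt (fun z => a / z + G z) (-a / z ^ 2 + deriv G z) z := by
        have h2 := (hasDerivAt_inv hz0).const_mul a
        have h3 := h2.add (hG.differentiableAt (isOpen_ball.mem_nhds hz.1)).hasDerivAt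
        refine (h3.congr_deriv (by ring)).congr_of_eventuallyEq ?_
        exact Eventually.of_forall fun w => by simp [div_eq_mul_inv]
      apply h1.congr_of_eventuallyEq
      filter_upwards [hDo.mem_nhds ⟨hz.1, hz0⟩] with w hw using hgG w hw
    rw [hg'.deriv, hu]
    field_simp
    ring
  have hsub : ball (0:ℂ) ρ \ lray θ ⊆ ball (0:ℂ) 1 \ lray θ := sdiff_subset_sdiff_left hb1
  have hu' : DifferentiableOn ℂ (deriv u) (ball 0 ρ) := (hud.deriv isOpen_ball).mono hb1
  obtain ⟨r, hr⟩ : ∃ r : ℂ → ℂ, r = fun z => deriv u z / u z := ⟨_, rfl⟩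
  have hrd : DifferentiableOn ℂ r (ball 0 ρ) := by
    rw [hr]; exact hu'.div (hud.mono hb1) hune
  have h0ρ : ball (0:ℂ) ρ ∈ 𝓝 (0:ℂ) := ball_mem_nhds _ hρ0
  have hu'0 : deriv u 0 = κ := by
    have hGd := (hG'.differentiableAt (isOpen_ball.mem_nhds h01)).hasDerivAt
    have h1 := (((hasDerivAt_id (0:ℂ)).const_mul κ).const_add (-a)).add (((hasDerivAt_id (0:ℂ)).pow 2).mul hGd)
    rw [hu]
    refine h1.deriv.trans ?_
    simp
  have hr0 : r 0 = -(κ / a) := by simp only [hr]; rw [hu'0, hu0]; rw [div_neg]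
  have hratio : ∀ z ∈ ball (0:ℂ) ρ \ lray θ, deriv (deriv (fun w => g w + κ * L w)) z / deriv (fun w => g w + κ * L w) z
      = -2 / z + r z := by
    intro z hz
    have hz0 := slit_ne θ z hz.2
    have e : deriv (fun w => g w + κ * L w) =ᶠ[𝓝 z] fun z => u z / z ^ 2 := by
      filter_upwards [(slit_open θ 1).mem_nhds (hsub hz)] with w hw using hphi w hw
    have h1 : HasDerivAt u (deriv u z) z := (hud.differentiableAt (isOpen_ball.mem_nhds (hb1 hz.1))).hasDerivAt
    have h2 := h1.div ((hasDerivAt_id z).pow 2) (pow_ne_zero 2 hz0)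
    have h3 : deriv (fun z => u z / z ^ 2) z = (deriv u z * z ^ 2 - u z * (2 * z)) / (z ^ 2) ^ 2 := by
      refine h2.deriv.trans ?_
      simp
    rw [e.deriv_eq, hphi z (hsub hz), h3, hr]
    have := hune z hz.1
    field_simp
    ring
  refine ⟨ρ, hρ0, hρ1, ?_, fun z => deriv r z + 2 * dslope r 0 z - (1 / 2) * r z ^ 2, ?_, ?_⟩
  · intro z hz
    rw [hphi z (hsub hz)]
    exact div_ne_zero (hune z hz.1) (pow_ne_zero 2 (slit_ne θ z hz.2))
  · have h1 := hrd.deriv isOpen_ball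
    have h2 := (Complex.differentiableOn_dslope h0ρ).2 hrd
    fun_prop
  · intro z hz
    have hz0 := slit_ne θ z hz.2
    unfold schwarzian
    rw [hratio z hz]
    have e : (fun w => deriv (deriv (fun w => g w + κ * L w)) w / deriv (fun w => g w + κ * L w) w) =ᶠ[𝓝 z]
        fun z => -2 / z + r z := by
      filter_upwards [(slit_open θ ρ).mem_nhds hz] with w hw using hratio w hw
    rw [e.deriv_eq]
    have h1 : HasDerivAt (fun z => -2 / z + r z) (2 / z ^ 2 + deriv r z) z := by
      have h2 := (hasDerivAt_inv hz0).const_mul (-2)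
      have h3 := h2.add (hrd.differentiableAt (isOpen_ball.mem_nhds hz.1)).hasDerivAt
      refine (h3.congr_deriv (by ring)).congr_of_eventuallyEq ?_
      exact Eventually.of_forall fun w => by simp [div_eq_mul_inv]
    rw [h1.deriv]
    simp only
    rw [dslope_of_ne _ hz0, slope_def_field, hr0]
    field_simp
    ring

end Helpers

/-- Theorem A, parabolic case: if every branch
`φ_θ = g + (c/2πi)·L_θ` is injective on `𝔻 ∖ l^θ` (`c ≠ 0`), then (1) `g` extends
meromorphically with a pole of order at most 1 at `0`, i.e. `g(z) = a₋₁/z + G(z)`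
with `G` holomorphic on `𝔻`; and (2) if `a₋₁ ≠ 0`, for each branch the Schwarzian
derivative `ξ = S(φ_θ)` is such that `ξ(z) + c/(a₋₁·π·i·z)` extends holomorphically
to some disc `B(0,ρ)`; i.e. `ξ` has a simple pole at `0` with residue
`-c/(a₋₁·π·i)`. -/
theorem theoremA_parabolic_case
    (g : ℂ → ℂ) (c : ℂ) (hc : c ≠ 0)
    (hg : DifferentiableOn ℂ g (ball (0 : ℂ) 1 \ {0}))
    (hyp : ∀ θ : ℝ, ∃ L : ℂ → ℂ,
      DifferentiableOn ℂ L (ball (0 : ℂ) 1 \ lray θ) ∧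
      (∀ z ∈ ball (0 : ℂ) 1 \ lray θ, Complex.exp (L z) = z) ∧
      InjOn (fun z => g z + c / (2 * (Real.pi : ℂ) * Complex.I) * L z)
        (ball (0 : ℂ) 1 \ lray θ)) :
    ∃ a : ℂ, ∃ G : ℂ → ℂ,
      DifferentiableOn ℂ G (ball (0 : ℂ) 1) ∧
      (∀ z ∈ ball (0 : ℂ) 1 \ {0}, g z = a / z + G z) ∧
      (a ≠ 0 → ∀ θ : ℝ, ∀ L : ℂ → ℂ,
        DifferentiableOn ℂ L (ball (0 : ℂ) 1 \ lray θ) →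
        (∀ z ∈ ball (0 : ℂ) 1 \ lray θ, Complex.exp (L z) = z) →
        InjOn (fun z => g z + c / (2 * (Real.pi : ℂ) * Complex.I) * L z)
          (ball (0 : ℂ) 1 \ lray θ) →
        ∃ ρ : ℝ, 0 < ρ ∧ ρ < 1 ∧
          (∀ z ∈ ball (0 : ℂ) ρ \ lray θ,
            deriv (fun w => g w + c / (2 * (Real.pi : ℂ) * Complex.I) * L w) z ≠ 0) ∧
          ∃ h : ℂ → ℂ, DifferentiableOn ℂ h (ball (0 : ℂ) ρ) ∧
            ∀ z ∈ ball (0 : ℂ) ρ \ lray θ,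
              h z = schwarzian
                  (fun w => g w + c / (2 * (Real.pi : ℂ) * Complex.I) * L w) z
                + c / (a * (Real.pi : ℂ) * Complex.I * z)) := by
  obtain ⟨a, G, hG, hgG⟩ := part1 g _ hg hyp
  refine ⟨a, G, hG, hgG, ?_⟩
  intro ha θ L hL he _
  obtain ⟨ρ, h0, h1, h2, h, hh, hz⟩ := part2 g (c / (2 * (Real.pi : ℂ) * Complex.I)) a G hg hG hgG ha θ L hL he
  refine ⟨ρ, h0, h1, h2, h, hh, ?_⟩
  intro z hzm
  rw [hz z hzm]
  congr 1
  have hz0 := slit_ne θ z hzm.2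
  have hpi : (Real.pi : ℂ) ≠ 0 := by exact_mod_cast Real.pi_ne_zero
  have hI := Complex.I_ne_zero
  field_simp
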